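/- Let q be a polynomial over ℂ satisfying the orthogonality relations ∫ t^k · q(t) · h(t) dμ(t) = 0 for every integer k with 0 ≤ k ≤ n − 1. Then the function of the second kind g(z) := ∫ q(t)·h(t)/(t − z) dμ(t) decays like z^{−(n+1)} at infinity: there exists a constant C > 0 such that |g(z)| ≤ C·|z|^{−(n+1)} for all z ∈ ℂ with |z| ≥ 2R₀. -/

import Mathlib

open MeasureTheory Polynomial

/-!
Put `w = q h`. From `t / (t - z) = 1 + z / (t - z)`, multiplying the density `w` by `t` multiplies
its Cauchy transform by `z`, up to the additive error `∫ w dμ`. As long as the moments of `w`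
vanish these errors are zero, so `zⁿ g(z)` is the Cauchy transform of `tⁿ w`. Like every Cauchy
transform of a compactly supported density, it is `O(1 / |z|)`.
-/

lemma norm_inv_sub_le {K : Type*} [NormedDivisionRing K] {R : ℝ} {t z : K}
    (ht : ‖t‖ ≤ R) (hz : R < ‖z‖) : ‖(t - z)⁻¹‖ ≤ (‖z‖ - R)⁻¹ := by
  rw [norm_inv, norm_sub_rev]
  refine inv_anti₀ (sub_pos.2 hz) ?_
  linarith [norm_sub_norm_le z t]

lemma inv_sub_le_div_of_le {R r x : ℝ} (hR : 0 ≤ R) (hRr : R < r) (hrx : r ≤ x) :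
    (x - R)⁻¹ ≤ r / (r - R) / x := by
  rw [div_div, ← one_div, div_le_div_iff₀ (by linarith) (mul_pos (by linarith) (by linarith))]
  nlinarith

lemma integrable_of_continuousOn_of_measure_compl_eq_zero {X F : Type*} [TopologicalSpace X]
    [T2Space X] [MeasurableSpace X] [OpensMeasurableSpace X] [NormedAddCommGroup F]
    {μ : Measure X} [IsFiniteMeasureOnCompacts μ] {K : Set X} {f : X → F}
    (hK : IsCompact K) (hf : ContinuousOn f K) (hμ : μ Kᶜ = 0) : Integrable f μ := by
  have hrestrict : μ.restrict K = μ := Measure.restrict_eq_self_of_ae_mem (mem_ae_iff.2 hμ)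
  simpa only [IntegrableOn, hrestrict] using hf.integrableOn_compact (μ := μ) hK

section CauchyTransform

variable {𝕜 E : Type*} [RCLike 𝕜] [NormedAddCommGroup E] [NormedSpace 𝕜 E]
  {μ : Measure 𝕜} {R : ℝ} {w : 𝕜 → E} {z : 𝕜}

lemma integrable_pow_smul (hμ : ∀ᵐ t ∂μ, ‖t‖ ≤ R) (hw : Integrable w μ) (k : ℕ) :
    Integrable (fun t ↦ t ^ k • w t) μ := by
  refine hw.bdd_smul (R ^ k) (by fun_prop) ?_
  filter_upwards [hμ] with t ht
  rw [norm_pow]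
  gcongr

lemma integrable_inv_sub_smul (hμ : ∀ᵐ t ∂μ, ‖t‖ ≤ R) (hw : Integrable w μ) (hz : R < ‖z‖) :
    Integrable (fun t ↦ (t - z)⁻¹ • w t) μ := by
  refine hw.bdd_smul (‖z‖ - R)⁻¹ (Measurable.aestronglyMeasurable (by fun_prop)) ?_
  filter_upwards [hμ] with t ht using norm_inv_sub_le ht hz

lemma integral_norm_pow_smul_le (hμ : ∀ᵐ t ∂μ, ‖t‖ ≤ R) (hw : Integrable w μ) (k : ℕ) :
    ∫ t, ‖t ^ k • w t‖ ∂μ ≤ R ^ k * ∫ t, ‖w t‖ ∂μ := by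
  rw [← integral_const_mul]
  refine integral_mono_ae (integrable_pow_smul hμ hw k).norm (hw.norm.const_mul _) ?_
  filter_upwards [hμ] with t ht
  rw [norm_smul, norm_pow]
  gcongr

variable [NormedSpace ℝ E]

/-- The Cauchy transform `z ↦ ∫ (t - z)⁻¹ • w t ∂μ` of the vector-valued density `w` with respect
to `μ`; for the density `q h` it is the function of the second kind of `q`. At `t = z` the
kernel takes the junk value `0⁻¹ = 0`. -/
noncomputable def cauchyTransform (μ : Measure 𝕜) (w : 𝕜 → E) (z : 𝕜) : E :=
  ∫ t, (t - z)⁻¹ • w t ∂μ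

lemma norm_cauchyTransform_le (hμ : ∀ᵐ t ∂μ, ‖t‖ ≤ R) (hw : Integrable w μ) (hz : R < ‖z‖) :
    ‖cauchyTransform μ w z‖ ≤ (‖z‖ - R)⁻¹ * ∫ t, ‖w t‖ ∂μ := by
  rw [← integral_const_mul]
  refine norm_integral_le_of_norm_le (hw.norm.const_mul _) ?_
  filter_upwards [hμ] with t ht
  rw [norm_smul]
  gcongr
  exact norm_inv_sub_le ht hz

variable [SMulCommClass ℝ 𝕜 E]

lemma cauchyTransform_id_smul (hμ : ∀ᵐ t ∂μ, ‖t‖ ≤ R) (hw : Integrable w μ) (hz : R < ‖z‖) :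
    cauchyTransform μ (fun t ↦ t • w t) z = ∫ t, w t ∂μ + z • cauchyTransform μ w z := by
  have hsplit : ∀ᵐ t ∂μ, (t - z)⁻¹ • t • w t = w t + z • (t - z)⁻¹ • w t := by
    filter_upwards [hμ] with t ht
    have hne : t - z ≠ 0 := sub_ne_zero.2 fun htz ↦ (htz ▸ ht).not_gt hz
    have hscalar : (t - z)⁻¹ * t = 1 + z * (t - z)⁻¹ := by field_simp; ring
    rw [smul_smul, hscalar, add_smul, one_smul, mul_smul]
  have hint : Integrable (fun t ↦ z • (t - z)⁻¹ • w t) μ :=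
    (integrable_inv_sub_smul hμ hw hz).smul z
  simp only [cauchyTransform]
  rw [integral_congr_ae hsplit, integral_add hw hint, integral_smul]

lemma cauchyTransform_pow_smul_of_moments_eq_zero (hμ : ∀ᵐ t ∂μ, ‖t‖ ≤ R) (hw : Integrable w μ)
    (hz : R < ‖z‖) {n : ℕ} (hmoment : ∀ k < n, ∫ t, t ^ k • w t ∂μ = 0) :
    cauchyTransform μ (fun t ↦ t ^ n • w t) z = z ^ n • cauchyTransform μ w z := by
  induction n with
  | zero => simp only [pow_zero, one_smul]
  | succ n ih =>
    have hrec := cauchyTransform_id_smul hμ (integrable_pow_smul hμ hw n) hz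
    rw [hmoment n n.lt_succ_self, zero_add, ih fun k hk ↦ hmoment k (hk.trans n.lt_succ_self)]
      at hrec
    simpa only [smul_smul, ← pow_succ'] using hrec

lemma norm_pow_mul_norm_cauchyTransform_le_of_moments_eq_zero (hμ : ∀ᵐ t ∂μ, ‖t‖ ≤ R)
    (hw : Integrable w μ) (hz : R < ‖z‖) {n : ℕ} (hmoment : ∀ k < n, ∫ t, t ^ k • w t ∂μ = 0) :
    ‖z‖ ^ n * ‖cauchyTransform μ w z‖ ≤ (‖z‖ - R)⁻¹ * (R ^ n * ∫ t, ‖w t‖ ∂μ) :=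
  calc ‖z‖ ^ n * ‖cauchyTransform μ w z‖
      = ‖cauchyTransform μ (fun t ↦ t ^ n • w t) z‖ := by
        rw [cauchyTransform_pow_smul_of_moments_eq_zero hμ hw hz hmoment, norm_smul, norm_pow]
    _ ≤ (‖z‖ - R)⁻¹ * ∫ t, ‖t ^ n • w t‖ ∂μ :=
        norm_cauchyTransform_le hμ (integrable_pow_smul hμ hw n) hz
    _ ≤ (‖z‖ - R)⁻¹ * (R ^ n * ∫ t, ‖w t‖ ∂μ) :=
        mul_le_mul_of_nonneg_left (integral_norm_pow_smul_le hμ hw n)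
          (inv_nonneg.2 (sub_pos.2 hz).le)

theorem second_kind_function_decay_general {r : ℝ} (hR : 0 ≤ R) (hRr : R < r)
    (hμ : μ (Metric.closedBall 0 R)ᶜ = 0) (hw : Integrable w μ) {n : ℕ}
    (hmoment : ∀ k < n, ∫ t, t ^ k • w t ∂μ = 0) :
    ∃ C : ℝ, 0 < C ∧ ∀ z : 𝕜, r ≤ ‖z‖ → ‖cauchyTransform μ w z‖ ≤ C / ‖z‖ ^ (n + 1) := by
  have hball : ∀ᵐ t ∂μ, t ∈ Metric.closedBall 0 R := mem_ae_iff.2 hμ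
  simp only [mem_closedBall_zero_iff] at hball
  set A : ℝ := R ^ n * ∫ t, ‖w t‖ ∂μ
  have hA : 0 ≤ A := by positivity
  have hr : 0 < r := hR.trans_lt hRr
  have hratio : 0 < r / (r - R) := div_pos hr (sub_pos.2 hRr)
  refine ⟨r / (r - R) * (A + 1), mul_pos hratio (by linarith), fun z hz ↦ ?_⟩
  have hz0 : 0 < ‖z‖ := hr.trans_le hz
  rw [le_div_iff₀ (pow_pos hz0 _)]
  calc ‖cauchyTransform μ w z‖ * ‖z‖ ^ (n + 1)
      = ‖z‖ ^ n * ‖cauchyTransform μ w z‖ * ‖z‖ := by ring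
    _ ≤ (‖z‖ - R)⁻¹ * A * ‖z‖ := by
        gcongr ?_ * _
        exact norm_pow_mul_norm_cauchyTransform_le_of_moments_eq_zero hball hw (hRr.trans_le hz)
          hmoment
    _ ≤ r / (r - R) / ‖z‖ * A * ‖z‖ := by
        gcongr
        exact inv_sub_le_div_of_le hR hRr hz
    _ = r / (r - R) * A := by field_simp
    _ ≤ r / (r - R) * (A + 1) := by gcongr; linarith

end CauchyTransform

/-- If the polynomial `q` satisfies the non-Hermitian orthogonality relations
`∫ tᵏ q(t) h(t) dμ(t) = 0` for `0 ≤ k ≤ n − 1`, then its function of the second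
kind `g(z) = ∫ q(t)h(t)/(t − z) dμ(t)` decays like `z^{−(n+1)}` at infinity. -/
theorem second_kind_function_decay
    (R₀ : ℝ) (hR₀ : 0 < R₀) (μ : Measure ℂ) [IsFiniteMeasure μ]
    (hμsupp : μ (Metric.closedBall 0 R₀)ᶜ = 0)
    (h : ℂ → ℂ) (hmeas : Measurable h) (M : ℝ) (hbdd : ∀ t : ℂ, ‖h t‖ ≤ M)
    (n : ℕ) (q : Polynomial ℂ)
    (horth : ∀ k : ℕ, k < n → ∫ t, t ^ k * q.eval t * h t ∂μ = 0) :
    ∃ C : ℝ, 0 < C ∧ ∀ z : ℂ, 2 * R₀ ≤ ‖z‖ →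
      ‖∫ t, q.eval t * h t / (t - z) ∂μ‖ ≤ C / ‖z‖ ^ (n + 1) := by
  have hqh : Integrable (fun t ↦ q.eval t * h t) μ :=
    (integrable_of_continuousOn_of_measure_compl_eq_zero (isCompact_closedBall 0 R₀)
      q.continuousOn hμsupp).mul_bdd hmeas.aestronglyMeasurable (.of_forall hbdd)
  simpa only [cauchyTransform, smul_eq_mul, div_eq_inv_mul] using
    second_kind_function_decay_general hR₀.le (by linarith : R₀ < 2 * R₀) hμsupp hqh
      (by simpa only [smul_eq_mul, mul_assoc] using horth)
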